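/- arXiv:2506.06258 — 2 statements merged into one kernel-verified Lean document; each statement's English description precedes it below -/
import Mathlib

section
/- The set \mathcal{X}^\star \subseteq \mathbb{R}^{n\times m} \times \mathbb{R}^n \times \mathbb{R}^m \times \mathbb{R}^n of all quadruples (x, t, p, y) satisfying the KKT system of the Fisher market problem is a bounded set. -/
/-!
Complementarity says that a consumer who buys a good pays exactly `u i j * y i` for each unit of it,
so consumer `i` spends `t i * y i = w i`. As every good is sold out, the prices add up to the total
budget. Nonnegativity of the utilities makes `y` and then `p` nonnegative, so this single identity
bounds every price. Summing `u i j * y i ≤ p j` over the goods `j` gives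
`(∑ j, u i j) * y i ≤ ∑ k, w k`, which bounds `y`. Market clearing gives `0 ≤ x i j ≤ 1`, and
hence `0 ≤ t i ≤ ∑ j, u i j`.
-/

open BigOperators

/-- The space of primal-dual quadruples `(x, t, p, y)` of the Fisher market problem. -/
abbrev FisherQuad (n m : ℕ) :=
  (Fin n → Fin m → ℝ) × (Fin n → ℝ) × (Fin m → ℝ) × (Fin n → ℝ)

/-- The KKT system of the Fisher market problem, as a predicate on quadruples. -/
def FisherKKT (n m : ℕ) (u : Fin n → Fin m → ℝ) (w : Fin n → ℝ)
    (z : FisherQuad n m) : Prop :=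
  (∀ i, z.2.1 i * z.2.2.2 i = w i) ∧
  (∀ i j, z.1 i j * (z.2.2.1 j - u i j * z.2.2.2 i) = 0) ∧
  (∀ i j, 0 ≤ z.2.2.1 j - u i j * z.2.2.2 i) ∧
  (∀ j, ∑ i, z.1 i j = 1) ∧
  (∀ i, z.2.1 i = ∑ j, u i j * z.1 i j) ∧
  (∀ i j, 0 ≤ z.1 i j)

namespace FisherKKT

variable {n m : ℕ} {u : Fin n → Fin m → ℝ} {w : Fin n → ℝ}
  {x : Fin n → Fin m → ℝ} {t : Fin n → ℝ} {p : Fin m → ℝ} {y : Fin n → ℝ}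

theorem utility_mul_multiplier (h : FisherKKT n m u w (x, t, p, y)) (i : Fin n) :
    t i * y i = w i :=
  h.1 i

theorem allocation_mul_price (h : FisherKKT n m u w (x, t, p, y)) (i : Fin n) (j : Fin m) :
    x i j * p j = u i j * x i j * y i := by
  linear_combination h.2.1 i j

theorem mul_multiplier_le_price (h : FisherKKT n m u w (x, t, p, y)) (i : Fin n) (j : Fin m) :
    u i j * y i ≤ p j :=
  sub_nonneg.mp (h.2.2.1 i j)

theorem sum_allocation (h : FisherKKT n m u w (x, t, p, y)) (j : Fin m) : ∑ i, x i j = 1 :=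
  h.2.2.2.1 j

theorem utility_eq_sum (h : FisherKKT n m u w (x, t, p, y)) (i : Fin n) :
    t i = ∑ j, u i j * x i j :=
  h.2.2.2.2.1 i

theorem allocation_nonneg (h : FisherKKT n m u w (x, t, p, y)) (i : Fin n) (j : Fin m) :
    0 ≤ x i j :=
  h.2.2.2.2.2 i j

theorem allocation_le_one (h : FisherKKT n m u w (x, t, p, y)) (i : Fin n) (j : Fin m) :
    x i j ≤ 1 :=
  have column_mem : (x · j) ∈ stdSimplex ℝ (Fin n) :=
    ⟨(h.allocation_nonneg · j), h.sum_allocation j⟩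
  (mem_Icc_of_mem_stdSimplex column_mem i).2

theorem sum_allocation_mul_price (h : FisherKKT n m u w (x, t, p, y)) (i : Fin n) :
    ∑ j, x i j * p j = w i := by
  simp_rw [h.allocation_mul_price, ← Finset.sum_mul, ← h.utility_eq_sum, h.utility_mul_multiplier]

theorem price_eq_sum_allocation_mul_price (h : FisherKKT n m u w (x, t, p, y)) (j : Fin m) :
    p j = ∑ i, x i j * p j := by
  rw [← Finset.sum_mul, h.sum_allocation, one_mul]

theorem sum_price (h : FisherKKT n m u w (x, t, p, y)) : ∑ j, p j = ∑ i, w i :=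
  calc
    ∑ j, p j = ∑ j, ∑ i, x i j * p j :=
      Finset.sum_congr rfl fun j _ => h.price_eq_sum_allocation_mul_price j
    _ = ∑ i, ∑ j, x i j * p j := Finset.sum_comm
    _ = ∑ i, w i := Finset.sum_congr rfl fun i _ => h.sum_allocation_mul_price i

theorem utility_nonneg (h : FisherKKT n m u w (x, t, p, y)) {i : Fin n} (hu : ∀ j, 0 ≤ u i j) :
    0 ≤ t i := by
  rw [h.utility_eq_sum]
  exact Finset.sum_nonneg fun j _ => mul_nonneg (hu j) (h.allocation_nonneg i j)

theorem utility_le_sum (h : FisherKKT n m u w (x, t, p, y)) {i : Fin n} (hu : ∀ j, 0 ≤ u i j) :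
    t i ≤ ∑ j, u i j := by
  rw [h.utility_eq_sum]
  exact Finset.sum_le_sum fun j _ => mul_le_of_le_one_right (hu j) (h.allocation_le_one i j)

theorem utility_pos (h : FisherKKT n m u w (x, t, p, y)) {i : Fin n} (hu : ∀ j, 0 ≤ u i j)
    (hw : 0 < w i) : 0 < t i := by
  refine (h.utility_nonneg hu).lt_of_ne' (left_ne_zero_of_mul (b := y i) ?_)
  rw [h.utility_mul_multiplier]
  exact hw.ne'

theorem multiplier_pos (h : FisherKKT n m u w (x, t, p, y)) {i : Fin n} (hu : ∀ j, 0 ≤ u i j)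
    (hw : 0 < w i) : 0 < y i := by
  refine pos_of_mul_pos_right ?_ (h.utility_nonneg hu)
  rw [h.utility_mul_multiplier]
  exact hw

theorem price_nonneg (h : FisherKKT n m u w (x, t, p, y)) (hu : ∀ i j, 0 ≤ u i j)
    (hw : ∀ i, 0 < w i) (j : Fin m) : 0 ≤ p j := by
  rw [h.price_eq_sum_allocation_mul_price]
  refine Finset.sum_nonneg fun i _ => ?_
  rw [h.allocation_mul_price]
  exact mul_nonneg (mul_nonneg (hu i j) (h.allocation_nonneg i j))
    (h.multiplier_pos (hu i) (hw i)).le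

theorem price_le_sum_budget (h : FisherKKT n m u w (x, t, p, y)) (hu : ∀ i j, 0 ≤ u i j)
    (hw : ∀ i, 0 < w i) (j : Fin m) : p j ≤ ∑ i, w i := by
  rw [← h.sum_price]
  exact Finset.single_le_sum (fun k _ => h.price_nonneg hu hw k) (Finset.mem_univ j)

theorem multiplier_le_div (h : FisherKKT n m u w (x, t, p, y)) {i : Fin n} (hu : ∀ j, 0 ≤ u i j)
    (hw : 0 < w i) : y i ≤ (∑ k, w k) / ∑ j, u i j := by
  have sum_pos : 0 < ∑ j, u i j := (h.utility_pos hu hw).trans_le (h.utility_le_sum hu)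
  rw [le_div_iff₀' sum_pos, Finset.sum_mul, ← h.sum_price]
  exact Finset.sum_le_sum fun j _ => h.mul_multiplier_le_price i j

end FisherKKT

theorem fisher_kkt_set_bounded_general {n m : ℕ} {u : Fin n → Fin m → ℝ} {w : Fin n → ℝ}
    (hu : ∀ i j, 0 ≤ u i j) (hw : ∀ i, 0 < w i) :
    {z : FisherQuad n m | FisherKKT n m u w z} ⊆
      Set.Icc 0 (fun _ _ => 1, fun i => ∑ j, u i j, fun _ => ∑ i, w i,
        fun i => (∑ k, w k) / ∑ j, u i j) := by
  rintro ⟨x, t, p, y⟩ (h : FisherKKT n m u w (x, t, p, y))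
  constructor
  · exact ⟨h.allocation_nonneg, fun i => h.utility_nonneg (hu i), h.price_nonneg hu hw,
      fun i => (h.multiplier_pos (hu i) (hw i)).le⟩
  · exact ⟨h.allocation_le_one, fun i => h.utility_le_sum (hu i), h.price_le_sum_budget hu hw,
      fun i => h.multiplier_le_div (hu i) (hw i)⟩

/-- The set `𝒳⋆` of all solutions of the KKT system of the Fisher market problem
is a bounded set. -/
theorem fisher_kkt_set_bounded (n m : ℕ) (u : Fin n → Fin m → ℝ) (w : Fin n → ℝ)
    (hu : ∀ i j, 0 ≤ u i j)
    (hrow : ∀ i, ∃ j, 0 < u i j)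
    (hcol : ∀ j, ∃ i, 0 < u i j)
    (hw : ∀ i, 0 < w i) :
    Bornology.IsBounded {z : FisherQuad n m | FisherKKT n m u w z} :=
  isCompact_Icc.isBounded.subset (fisher_kkt_set_bounded_general hu hw)
end

section
/- Let \mathcal{X}^\star denote the set of quadruples (x, t, p, y) satisfying the KKT system of the Fisher market problem, and for \xi > 0 define the scaled KKT residual F_\xi(x, t, p, y) as the vector with blocks (t_i y_i - w_i)_i, (x_{ij} - \max(x_{ij} - \frac{1}{\xi}(p_j - u_{ij} y_i), 0))_{ij}, (\min(p_j - u_{ij} y_i, 0))_{ij}, (\sum_{i=1}^n x_{ij} - 1)_j, and (t_i - \sum_{j=1}^m u_{ij} x_{ij})_i. Then for every R > 0 there exists \gamma > 0 such that \|F_\xi(x, t, p, y)\| \ge \gamma \cdot \mathrm{dist}((x, t, p, y), \mathcal{X}^\star) for every (x, t, p, y) with x \ge 0 and \|(x, t, p, y)\| \le R. -/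
/-!
Let `ε` be the residual at `z = (x, t, p, y)`. Since `x ≥ -ε`, one may pass to `x⁺`. Fix a KKT point
`z* = (x*, t*, p*, y*)`. If `ε` is bounded below, the bound holds since the distance is bounded on
the region, so `ε` may be taken small; then `y` is bounded away from zero.

Write `T = ‖t - t*‖`. From `t y ≈ w` one gets `‖y - y*‖ = O(T + ε)`; from `p j ≈ max_i u i j * y i`
also `‖p - p*‖ = O(T + ε)`; and `x i j = O(T + ε)` wherever `p* j > u i j * y* i`. Given `t*`, `p*`
and `y*`, the admissible `x'` form the polyhedron of nonnegative solutions of a linear system whose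
residual at `x` is therefore `O(T + ε)`, so Hoffman's bound yields a KKT point
`z' = (x', t*, p*, y*)` at distance `D = O(T + ε)` from `z`.

On the other hand the KKT operator is monotone, strongly so in `t`, which gives `T² = O(ε D)`.
Hence `T² = O(ε (T + ε))`, so `T = O(ε)` and `D = O(ε)`.

Hoffman's bound is proved by sign patterns: a displacement `v` can be shrunk coordinatewise towards
`0`, keeping `A v`, until its sign cone meets `ker A` only in `0`. On each of the finitely many such
cones `‖v‖ ≤ C ‖A v‖` by compactness.

The estimates are made in the sup norm `‖·‖` of the product `FisherQuad`, which is equivalent to the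
Euclidean `quadNorm`.
-/

open BigOperators

noncomputable section

/-- The Euclidean norm of a quadruple `(x, t, p, y)`. -/
def quadNorm (n m : ℕ) (z : FisherQuad n m) : ℝ :=
  Real.sqrt ((∑ i, ∑ j, (z.1 i j) ^ 2) + (∑ i, (z.2.1 i) ^ 2) +
    (∑ j, (z.2.2.1 j) ^ 2) + (∑ i, (z.2.2.2 i) ^ 2))

/-- The Euclidean distance from a quadruple to a set of quadruples. -/
def quadDist (n m : ℕ) (z : FisherQuad n m) (S : Set (FisherQuad n m)) : ℝ :=
  sInf {d : ℝ | ∃ z' ∈ S, d = quadNorm n m (z - z')}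

/-- The Euclidean norm of the scaled KKT residual `F_ξ(x, t, p, y)`. -/
def FResidNorm (n m : ℕ) (u : Fin n → Fin m → ℝ) (w : Fin n → ℝ) (ξ : ℝ)
    (z : FisherQuad n m) : ℝ :=
  Real.sqrt ((∑ i, (z.2.1 i * z.2.2.2 i - w i) ^ 2) +
    (∑ i, ∑ j, (z.1 i j - max (z.1 i j - ξ⁻¹ * (z.2.2.1 j - u i j * z.2.2.2 i)) 0) ^ 2) +
    (∑ i, ∑ j, (min (z.2.2.1 j - u i j * z.2.2.2 i) 0) ^ 2) +
    (∑ j, ((∑ i, z.1 i j) - 1) ^ 2) +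
    (∑ i, (z.2.1 i - ∑ j, u i j * z.1 i j) ^ 2))

open Filter Topology

section Hoffman

/-- The closed cone of vectors whose `i`-th coordinate is nonnegative, zero or nonpositive according
as `σ i` is `1`, `0` or `-1`. On the finitely many such cones Hoffman's bound is proved
separately. -/
def signCone {ι : Type*} (σ : ι → SignType) : Set (ι → ℝ) :=
  {v | ∀ i, (σ i : ℝ) * |v i| = v i}

theorem mem_signCone_sign {ι : Type*} (v : ι → ℝ) :
    v ∈ signCone fun i => SignType.sign (v i) :=
  fun i => sign_mul_abs (v i)

theorem isClosed_signCone {ι : Type*} (σ : ι → SignType) : IsClosed (signCone σ) := by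
  simp only [signCone, Set.ofPred_forall]
  exact isClosed_iInter fun i => isClosed_eq (by fun_prop) (by fun_prop)

theorem smul_mem_signCone {ι : Type*} {σ : ι → SignType} {v : ι → ℝ} (hv : v ∈ signCone σ)
    {a : ℝ} (ha : 0 ≤ a) : a • v ∈ signCone σ := fun i => by
  rw [Pi.smul_apply, smul_eq_mul, abs_mul, abs_of_nonneg ha, mul_left_comm, hv i]

/-- Compactness of the unit sphere of the cone bounds the ratio `‖v‖ / ‖A v‖`. -/
theorem exists_norm_le_mul_norm_of_isClosed_cone {E F : Type*} [NormedAddCommGroup E]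
    [NormedSpace ℝ E] [ProperSpace E] [NormedAddCommGroup F] [NormedSpace ℝ F] (A : E →L[ℝ] F)
    {K : Set E} (hK : IsClosed K) (hsmul : ∀ v ∈ K, ∀ a : ℝ, 0 ≤ a → a • v ∈ K)
    (hker : ∀ v ∈ K, A v = 0 → v = 0) :
    ∃ C : ℝ, 0 ≤ C ∧ ∀ v ∈ K, ‖v‖ ≤ C * ‖A v‖ := by
  have hpos : ∀ v ∈ Metric.sphere (0 : E) 1 ∩ K, 0 < ‖A v‖ := fun v hv =>
    norm_pos_iff.2 fun hAv => by simpa [hker v hv.2 hAv] using hv.1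
  obtain ⟨c, hc, hcA⟩ :=
    ((isCompact_sphere (0 : E) 1).inter_right hK).exists_forall_le' (by fun_prop) hpos
  refine ⟨c⁻¹, by positivity, fun v hv => ?_⟩
  obtain rfl | hv0 := eq_or_ne v 0
  · simp
  have hunit := hcA (‖v‖⁻¹ • v) ⟨by simp [norm_smul, hv0], hsmul v hv _ (by positivity)⟩
  rw [map_smul, norm_smul, norm_inv, norm_norm, le_inv_mul_iff₀ (norm_pos_iff.2 hv0)] at hunit
  rwa [le_inv_mul_iff₀ hc, mul_comm]

theorem eventually_sub_mul_mem_uIcc {a k : ℝ} (hk : (SignType.sign a : ℝ) * |k| = k) :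
    ∀ᶠ τ in 𝓝[>] (0 : ℝ), a - τ * k ∈ Set.uIcc 0 a ∧ |a - τ * k| = |a| - τ * |k| := by
  obtain rfl | ha := eq_or_ne a 0
  · obtain rfl : k = 0 := by simpa using hk.symm
    simp
  have hsmall : ∀ᶠ τ in 𝓝[>] (0 : ℝ), τ * |k| < |a| :=
    (Continuous.tendsto' (by fun_prop) 0 0 (by simp)).mono_left nhdsWithin_le_nhds
      |>.eventually_lt_const (abs_pos.2 ha)
  filter_upwards [hsmall, self_mem_nhdsWithin] with τ hτ (hτ0 : 0 < τ)
  have hτk : 0 ≤ τ * |k| := by positivity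
  obtain ha | ha := ha.lt_or_gt
  · have hk' : |k| = -k := by simpa [sign_neg ha, neg_eq_iff_eq_neg] using hk
    rw [abs_of_neg ha] at hτ ⊢
    rw [hk'] at hτ hτk ⊢
    rw [Set.uIcc_of_ge ha.le, abs_of_nonpos (by linarith)]
    exact ⟨⟨by linarith, by linarith⟩, by ring⟩
  · have hk' : |k| = k := by simpa [sign_pos ha] using hk
    rw [abs_of_pos ha] at hτ ⊢
    rw [hk'] at hτ hτk ⊢
    rw [Set.uIcc_of_le ha.le, abs_of_nonneg (by linarith)]
    exact ⟨⟨by linarith, by linarith⟩, rfl⟩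

/-- Take a point of least `ℓ¹` norm: a nonzero kernel vector in its sign cone could be subtracted,
with a small positive coefficient, to decrease that norm. -/
theorem exists_mem_uIcc_map_eq_ker_signCone {ι : Type*} [Finite ι] {F : Type*}
    [NormedAddCommGroup F] [NormedSpace ℝ F] (A : (ι → ℝ) →L[ℝ] F) (v : ι → ℝ) :
    ∃ v' ∈ Set.uIcc 0 v, A v' = A v ∧
      ∀ k ∈ signCone (fun i => SignType.sign (v' i)), A k = 0 → k = 0 := by
  have := Fintype.ofFinite ι
  have hK : IsCompact (Set.uIcc 0 v ∩ A ⁻¹' {A v}) :=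
    (isCompact_Icc (a := 0 ⊓ v) (b := 0 ⊔ v)).inter_right (isClosed_singleton.preimage A.continuous)
  obtain ⟨v', ⟨hv', hA : A v' = A v⟩, hmin⟩ := hK.exists_isMinOn
    ⟨v, Set.right_mem_uIcc, rfl⟩ (f := fun v' => ∑ i, |v' i|) (by fun_prop)
  refine ⟨v', hv', hA, fun k hk hAk => ?_⟩
  obtain ⟨τ, hτ, hτ0 : 0 < τ⟩ :=
    ((eventually_all.2 fun i => eventually_sub_mul_mem_uIcc (hk i)).and self_mem_nhdsWithin).exists
  have hmem : v' - τ • k ∈ Set.uIcc 0 v ∩ A ⁻¹' {A v} :=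
    ⟨Set.uIcc_subset_uIcc Set.left_mem_uIcc hv' ⟨fun i => (hτ i).1.1, fun i => (hτ i).1.2⟩,
      by simp [hA, hAk]⟩
  have hle : ∑ i, |v' i| ≤ ∑ i, |v' i - τ * k i| := hmin hmem
  simp only [fun i => (hτ i).2, Finset.sum_sub_distrib, ← Finset.mul_sum] at hle
  have hsum : ∑ i, |k i| ≤ 0 := by
    by_contra! hpos
    linarith [mul_pos hτ0 hpos]
  funext i
  exact abs_nonpos_iff.1
    ((Finset.single_le_sum (fun _ _ => abs_nonneg _) (Finset.mem_univ i)).trans hsum)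

theorem exists_norm_le_mul_norm_of_ker_signCone {ι : Type*} [Fintype ι] {F : Type*}
    [NormedAddCommGroup F] [NormedSpace ℝ F] (A : (ι → ℝ) →L[ℝ] F) :
    ∃ C : ℝ, 0 ≤ C ∧ ∀ σ, (∀ k ∈ signCone σ, A k = 0 → k = 0) →
      ∀ v ∈ signCone σ, ‖v‖ ≤ C * ‖A v‖ := by
  have hσ : ∀ σ : ι → SignType, ∃ C : ℝ, (∀ k ∈ signCone σ, A k = 0 → k = 0) →
      ∀ v ∈ signCone σ, ‖v‖ ≤ C * ‖A v‖ := fun σ => by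
    by_cases hker : ∀ k ∈ signCone σ, A k = 0 → k = 0
    · obtain ⟨C, -, hC⟩ := exists_norm_le_mul_norm_of_isClosed_cone A (isClosed_signCone σ)
        (fun v hv a ha => smul_mem_signCone hv ha) hker
      exact ⟨C, fun _ => hC⟩
    · exact ⟨0, fun h => absurd h hker⟩
  choose C hC using hσ
  obtain ⟨M, hM⟩ := Finite.exists_le C
  refine ⟨max M 0, le_max_right _ _, fun σ hker v hv => (hC σ hker v hv).trans ?_⟩
  gcongr
  exact (hM σ).trans (le_max_left _ _)

/-- Hoffman's error bound for the polyhedron `{x' | 0 ≤ x', A x' = A x₀}`, at nonnegative points. -/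
theorem exists_nonneg_map_eq_norm_sub_le {ι : Type*} [Fintype ι] {F : Type*}
    [NormedAddCommGroup F] [NormedSpace ℝ F] (A : (ι → ℝ) →L[ℝ] F) :
    ∃ C : ℝ, 0 ≤ C ∧ ∀ x x₀ : ι → ℝ, 0 ≤ x → 0 ≤ x₀ →
      ∃ x', 0 ≤ x' ∧ A x' = A x₀ ∧ ‖x - x'‖ ≤ C * ‖A x - A x₀‖ := by
  obtain ⟨C, hC0, hC⟩ := exists_norm_le_mul_norm_of_ker_signCone A
  refine ⟨C, hC0, fun x x₀ hx hx₀ => ?_⟩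
  obtain ⟨v, hv, hAv, hker⟩ := exists_mem_uIcc_map_eq_ker_signCone A (x₀ - x)
  refine ⟨x + v, ?_, by rw [map_add, hAv, map_sub, add_sub_cancel], ?_⟩
  · have hneg : -x ≤ v := (le_inf (neg_nonpos.2 hx) (by simpa using hx₀)).trans hv.1
    simpa using add_le_add_right hneg x
  · simpa [hAv, norm_sub_rev] using hC _ hker v (mem_signCone_sign v)

end Hoffman

namespace FisherQuad

variable {n m : ℕ}

/-- The allocation `x` of a quadruple `(x, t, p, y)`. -/
abbrev x (z : FisherQuad n m) : Fin n → Fin m → ℝ := z.1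

/-- The utilities `t` of a quadruple `(x, t, p, y)`. -/
abbrev t (z : FisherQuad n m) : Fin n → ℝ := z.2.1

/-- The prices `p` of a quadruple `(x, t, p, y)`. -/
abbrev p (z : FisherQuad n m) : Fin m → ℝ := z.2.2.1

/-- The multipliers `y` of a quadruple `(x, t, p, y)`. -/
abbrev y (z : FisherQuad n m) : Fin n → ℝ := z.2.2.2

/-- The slack `p j - u i j * y i` of the dual constraints. -/
def dualSlack (u : Fin n → Fin m → ℝ) (z : FisherQuad n m) (i : Fin n) (j : Fin m) : ℝ :=
  z.p j - u i j * z.y i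

theorem abs_x_le_norm (z : FisherQuad n m) (i : Fin n) (j : Fin m) : |z.x i j| ≤ ‖z‖ :=
  (norm_le_pi_norm (z.x i) j).trans ((norm_le_pi_norm z.x i).trans (norm_fst_le z))

theorem norm_t_le_norm (z : FisherQuad n m) : ‖z.t‖ ≤ ‖z‖ :=
  (norm_fst_le z.2).trans (norm_snd_le z)

theorem norm_dual_le_norm (z : FisherQuad n m) : ‖z.2.2‖ ≤ ‖z‖ :=
  (norm_snd_le z.2).trans (norm_snd_le z)

theorem abs_t_le_norm (z : FisherQuad n m) (i : Fin n) : |z.t i| ≤ ‖z‖ :=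
  (norm_le_pi_norm z.t i).trans z.norm_t_le_norm

theorem abs_p_le_norm (z : FisherQuad n m) (j : Fin m) : |z.p j| ≤ ‖z‖ :=
  (norm_le_pi_norm z.p j).trans ((norm_fst_le z.2.2).trans z.norm_dual_le_norm)

theorem abs_y_le_norm (z : FisherQuad n m) (i : Fin n) : |z.y i| ≤ ‖z‖ :=
  (norm_le_pi_norm z.y i).trans ((norm_snd_le z.2.2).trans z.norm_dual_le_norm)

theorem norm_le_iff {z : FisherQuad n m} {D : ℝ} (hD : 0 ≤ D) :
    ‖z‖ ≤ D ↔ (∀ i j, |z.x i j| ≤ D) ∧ (∀ i, |z.t i| ≤ D) ∧ (∀ j, |z.p j| ≤ D) ∧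
      ∀ i, |z.y i| ≤ D := by
  simp only [Prod.norm_def, sup_le_iff, pi_norm_le_iff_of_nonneg hD, Real.norm_eq_abs]

theorem norm_posPart_le (z : FisherQuad n m) : ‖((z.x⁺, z.2) : FisherQuad n m)‖ ≤ ‖z‖ :=
  (norm_le_iff (norm_nonneg z)).2 ⟨fun i j => (abs_of_nonneg (posPart_nonneg _)).trans_le <|
    (sup_le (le_abs_self _) (abs_nonneg _)).trans (z.abs_x_le_norm i j), z.abs_t_le_norm,
    z.abs_p_le_norm, z.abs_y_le_norm⟩

theorem abs_dualSlack_sub_le (u : Fin n → Fin m → ℝ) (z z' : FisherQuad n m) (i : Fin n)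
    (j : Fin m) : |z.dualSlack u i j - z'.dualSlack u i j| ≤ (1 + ‖u‖) * ‖z.2.2 - z'.2.2‖ := by
  have hu : |u i j| ≤ ‖u‖ := (norm_le_pi_norm (u i) j).trans (norm_le_pi_norm u i)
  have hp : |z.p j - z'.p j| ≤ ‖z.2.2 - z'.2.2‖ :=
    (norm_le_pi_norm (z.p - z'.p) j).trans (norm_fst_le (z.2.2 - z'.2.2))
  have hy : |z.y i - z'.y i| ≤ ‖z.2.2 - z'.2.2‖ :=
    (norm_le_pi_norm (z.y - z'.y) i).trans (norm_snd_le (z.2.2 - z'.2.2))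
  calc |z.dualSlack u i j - z'.dualSlack u i j|
      = |(z.p j - z'.p j) - u i j * (z.y i - z'.y i)| := by unfold dualSlack; ring_nf
    _ ≤ |z.p j - z'.p j| + |u i j| * |z.y i - z'.y i| := by rw [← abs_mul]; exact abs_sub _ _
    _ ≤ ‖z.2.2 - z'.2.2‖ + ‖u‖ * ‖z.2.2 - z'.2.2‖ := by gcongr
    _ = (1 + ‖u‖) * ‖z.2.2 - z'.2.2‖ := by ring

end FisherQuad

section EuclideanNorm

theorem sq_le_sum_sq {ι : Type*} [Fintype ι] (f : ι → ℝ) (i : ι) : f i ^ 2 ≤ ∑ i, f i ^ 2 :=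
  Finset.single_le_sum (f := fun i => f i ^ 2) (fun _ _ => sq_nonneg _) (Finset.mem_univ i)

theorem sq_le_sum_sum_sq {ι κ : Type*} [Fintype ι] [Fintype κ] (f : ι → κ → ℝ) (i : ι) (j : κ) :
    f i j ^ 2 ≤ ∑ i, ∑ j, f i j ^ 2 :=
  (sq_le_sum_sq (f i) j).trans <| Finset.single_le_sum (f := fun i => ∑ j, f i j ^ 2)
    (fun _ _ => Finset.sum_nonneg fun _ _ => sq_nonneg _) (Finset.mem_univ i)

theorem sum_sq_le_card_mul_sq {ι : Type*} [Fintype ι] {f : ι → ℝ} {D : ℝ} (h : ∀ i, |f i| ≤ D) :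
    ∑ i, f i ^ 2 ≤ Fintype.card ι * D ^ 2 := by
  simpa using Finset.sum_le_sum fun i (_ : i ∈ Finset.univ) =>
    sq_le_sq' (abs_le.1 (h i)).1 (abs_le.1 (h i)).2

variable {n m : ℕ}

theorem norm_le_quadNorm (z : FisherQuad n m) : ‖z‖ ≤ quadNorm n m z := by
  refine (FisherQuad.norm_le_iff (Real.sqrt_nonneg _)).2 ⟨fun i j => ?_, fun i => ?_, fun j => ?_,
    fun i => ?_⟩ <;> refine Real.abs_le_sqrt ?_
  · iterate 3 refine le_add_of_le_of_nonneg ?_ (by positivity)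
    exact sq_le_sum_sum_sq z.x i j
  · iterate 2 refine le_add_of_le_of_nonneg ?_ (by positivity)
    exact le_add_of_nonneg_of_le (by positivity) (sq_le_sum_sq z.t i)
  · refine le_add_of_le_of_nonneg ?_ (by positivity)
    exact le_add_of_nonneg_of_le (by positivity) (sq_le_sum_sq z.p j)
  · exact le_add_of_nonneg_of_le (by positivity) (sq_le_sum_sq z.y i)

theorem quadNorm_le_sqrt_mul_norm (z : FisherQuad n m) :
    quadNorm n m z ≤ Real.sqrt (n * m + n + m + n) * ‖z‖ := by
  have hx := sum_sq_le_card_mul_sq fun q : Fin n × Fin m => z.abs_x_le_norm q.1 q.2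
  have ht := sum_sq_le_card_mul_sq z.abs_t_le_norm
  have hp := sum_sq_le_card_mul_sq z.abs_p_le_norm
  have hy := sum_sq_le_card_mul_sq z.abs_y_le_norm
  simp only [Fintype.sum_prod_type, Fintype.card_prod, Fintype.card_fin, Nat.cast_mul]
    at hx ht hp hy
  rw [quadNorm, Real.sqrt_le_left (by positivity), mul_pow, Real.sq_sqrt (by positivity)]
  linarith

theorem quadDist_le_quadNorm_sub {z z' : FisherQuad n m} {S : Set (FisherQuad n m)} (h : z' ∈ S) :
    quadDist n m z S ≤ quadNorm n m (z - z') := by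
  refine csInf_le ⟨0, ?_⟩ ⟨z', h, rfl⟩
  rintro _ ⟨_, _, rfl⟩
  exact Real.sqrt_nonneg _

theorem abs_residual_le_FResidNorm (u : Fin n → Fin m → ℝ) (w : Fin n → ℝ) (ξ : ℝ)
    (z : FisherQuad n m) :
    (∀ i, |z.t i * z.y i - w i| ≤ FResidNorm n m u w ξ z) ∧
    (∀ i j, |z.x i j - max (z.x i j - ξ⁻¹ * z.dualSlack u i j) 0| ≤ FResidNorm n m u w ξ z) ∧
    (∀ i j, |min (z.dualSlack u i j) 0| ≤ FResidNorm n m u w ξ z) ∧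
    (∀ j, |(∑ i, z.x i j) - 1| ≤ FResidNorm n m u w ξ z) ∧
    (∀ i, |z.t i - ∑ j, u i j * z.x i j| ≤ FResidNorm n m u w ξ z) := by
  refine ⟨fun i => ?_, fun i j => ?_, fun i j => ?_, fun j => ?_, fun i => ?_⟩ <;>
    refine Real.abs_le_sqrt ?_
  · iterate 4 refine le_add_of_le_of_nonneg ?_ (by positivity)
    exact sq_le_sum_sq (fun i => z.t i * z.y i - w i) i
  · iterate 3 refine le_add_of_le_of_nonneg ?_ (by positivity)
    exact le_add_of_nonneg_of_le (by positivity) (sq_le_sum_sum_sq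
      (fun i j => z.x i j - max (z.x i j - ξ⁻¹ * z.dualSlack u i j) 0) i j)
  · iterate 2 refine le_add_of_le_of_nonneg ?_ (by positivity)
    exact le_add_of_nonneg_of_le (by positivity)
      (sq_le_sum_sum_sq (fun i j => min (z.dualSlack u i j) 0) i j)
  · refine le_add_of_le_of_nonneg ?_ (by positivity)
    exact le_add_of_nonneg_of_le (by positivity) (sq_le_sum_sq (fun j => (∑ i, z.x i j) - 1) j)
  · exact le_add_of_nonneg_of_le (by positivity)
      (sq_le_sum_sq (fun i => z.t i - ∑ j, u i j * z.x i j) i)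

end EuclideanNorm

section KKT

variable {n m : ℕ} {u : Fin n → Fin m → ℝ} {w : Fin n → ℝ} {ξ ε : ℝ} {z z' : FisherQuad n m}

namespace FisherKKT

theorem t_mul_y (hz : FisherKKT n m u w z) (i : Fin n) : z.t i * z.y i = w i := hz.1 i

theorem x_mul_dualSlack (hz : FisherKKT n m u w z) (i : Fin n) (j : Fin m) :
    z.x i j * z.dualSlack u i j = 0 := hz.2.1 i j

theorem dualSlack_nonneg (hz : FisherKKT n m u w z) (i : Fin n) (j : Fin m) :
    0 ≤ z.dualSlack u i j := hz.2.2.1 i j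

theorem sum_x (hz : FisherKKT n m u w z) (j : Fin m) : ∑ i, z.x i j = 1 := hz.2.2.2.1 j

theorem t_eq (hz : FisherKKT n m u w z) (i : Fin n) : z.t i = ∑ j, u i j * z.x i j :=
  hz.2.2.2.2.1 i

theorem x_nonneg (hz : FisherKKT n m u w z) (i : Fin n) (j : Fin m) : 0 ≤ z.x i j :=
  hz.2.2.2.2.2 i j

theorem x_eq_zero (hz : FisherKKT n m u w z) {i : Fin n} {j : Fin m}
    (h : 0 < z.dualSlack u i j) : z.x i j = 0 :=
  (mul_eq_zero.1 (hz.x_mul_dualSlack i j)).resolve_right h.ne'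

theorem t_pos (hz : FisherKKT n m u w z) (hu : ∀ i j, 0 ≤ u i j) (hw : ∀ i, 0 < w i)
    (i : Fin n) : 0 < z.t i := by
  have ht : 0 ≤ z.t i :=
    hz.t_eq i ▸ Finset.sum_nonneg fun j _ => mul_nonneg (hu i j) (hz.x_nonneg i j)
  exact ht.lt_of_ne' (left_ne_zero_of_mul (hz.t_mul_y i ▸ (hw i).ne'))

end FisherKKT

/-- The KKT system up to an error `ε`, with exact nonnegativity of `x`. Complementarity is kept as
a dichotomy: either the dual slack is of order `ε`, or it is nonnegative and `x i j ≤ ε`. -/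
structure ApproxKKT (u : Fin n → Fin m → ℝ) (w : Fin n → ℝ) (ξ ε : ℝ) (z : FisherQuad n m) :
    Prop where
  budget : ∀ i, |z.t i * z.y i - w i| ≤ ε
  compl : ∀ i j, |z.dualSlack u i j| ≤ ξ * ε ∨ (0 ≤ z.dualSlack u i j ∧ z.x i j ≤ ε)
  neg_le_dualSlack : ∀ i j, -ε ≤ z.dualSlack u i j
  supply : ∀ j, |(∑ i, z.x i j) - 1| ≤ ε
  utility : ∀ i, |z.t i - ∑ j, u i j * z.x i j| ≤ ε
  x_nonneg : ∀ i j, 0 ≤ z.x i j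

theorem compl_dichotomy {x s : ℝ} (hξ : 0 < ξ) (h : |x - max (x - ξ⁻¹ * s) 0| ≤ ε) :
    |s| ≤ ξ * ε ∨ (0 ≤ s ∧ x ≤ ε) := by
  have hs : s = ξ * (ξ⁻¹ * s) := by field_simp
  obtain hpos | hneg := le_total 0 (x - ξ⁻¹ * s)
  · left
    rw [max_eq_left hpos, sub_sub_cancel] at h
    rw [hs, abs_mul, abs_of_pos hξ]
    gcongr
  · rw [max_eq_right hneg, sub_zero] at h
    obtain hs0 | hs0 := le_total 0 s
    · exact .inr ⟨hs0, (le_abs_self x).trans h⟩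
    · left
      rw [abs_of_nonpos hs0, hs, ← mul_neg]
      gcongr
      linarith [neg_le_abs x]

theorem neg_le_of_abs_sub_max_le {x a : ℝ} (h : |x - max a 0| ≤ ε) : -x ≤ ε := by
  linarith [neg_le_abs (x - max a 0), le_max_right a 0]

theorem abs_posPart_sub_le {x : ℝ} (hε : 0 ≤ ε) (hx : -x ≤ ε) : |x⁺ - x| ≤ ε := by
  have hneg : x⁺ - x = x⁻ := by rw [sub_eq_iff_eq_add', ← sub_eq_iff_eq_add, posPart_sub_negPart]
  rw [hneg, abs_of_nonneg (negPart_nonneg x)]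
  exact sup_le hx hε

theorem abs_sum_mul_sub_sum_mul_le {ι : Type*} [Fintype ι] {a f g : ι → ℝ} (ha : ∀ i, 0 ≤ a i)
    (h : ∀ i, |f i - g i| ≤ ε) : |∑ i, a i * f i - ∑ i, a i * g i| ≤ (∑ i, a i) * ε := by
  rw [← Finset.sum_sub_distrib, Finset.sum_mul]
  refine (Finset.abs_sum_le_sum_abs _ _).trans (Finset.sum_le_sum fun i _ => ?_)
  rw [← mul_sub, abs_mul, abs_of_nonneg (ha i)]
  exact mul_le_mul_of_nonneg_left (h i) (ha i)

/-- The second block of the residual forces `x ≥ -ε`, so passing to `x⁺` costs only a factor in the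
error. -/
theorem approxKKT_posPart (hu : ∀ i j, 0 ≤ u i j) (hξ : 0 < ξ) (z : FisherQuad n m) :
    ApproxKKT u w ξ ((1 + n + ∑ i, ∑ j, u i j) * FResidNorm n m u w ξ z) (z.x⁺, z.2) ∧
      ‖(z.x⁺, z.2) - z‖ ≤ FResidNorm n m u w ξ z := by
  obtain ⟨hbudget, hcompl, hslack, hsupply, hutil⟩ := abs_residual_le_FResidNorm u w ξ z
  have hε : 0 ≤ FResidNorm n m u w ξ z := Real.sqrt_nonneg _
  generalize FResidNorm n m u w ξ z = ε at *
  have hx : ∀ i j, |(z.x i j)⁺ - z.x i j| ≤ ε := fun i j =>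
    abs_posPart_sub_le hε (neg_le_of_abs_sub_max_le (hcompl i j))
  have hrow : ∀ i, 0 ≤ ∑ j, u i j := fun i => Finset.sum_nonneg fun j _ => hu i j
  have hsum : 0 ≤ ∑ i, ∑ j, u i j := Finset.sum_nonneg fun i _ => hrow i
  have hκ : ε ≤ (1 + n + ∑ i, ∑ j, u i j) * ε :=
    le_mul_of_one_le_left hε (by linarith [n.cast_nonneg (α := ℝ)])
  refine ⟨⟨fun i => (hbudget i).trans hκ, fun i j => ?_, fun i j => ?_, fun j => ?_, fun i => ?_,
    fun i j => posPart_nonneg _⟩, ?_⟩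
  · exact (compl_dichotomy hξ (hcompl i j)).imp (fun h => h.trans (by gcongr))
      fun h => ⟨h.1, (sup_le h.2 hε).trans hκ⟩
  · exact (neg_le_neg hκ).trans ((abs_le.1 (hslack i j)).1.trans (min_le_left _ _))
  · have hdiff := abs_sum_mul_sub_sum_mul_le (a := 1) (fun _ => zero_le_one) fun i => hx i j
    simp only [Pi.one_apply, one_mul, Finset.sum_const, Finset.card_univ, Fintype.card_fin,
      nsmul_eq_mul, mul_one] at hdiff
    refine (abs_sub_le (∑ i, (z.x i j)⁺) (∑ i, z.x i j) 1).trans ?_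
    linarith [hsupply j, mul_nonneg hsum hε]
  · have hdiff := abs_sum_mul_sub_sum_mul_le (hu i) (hx i)
    have hi : (∑ j, u i j) * ε ≤ (∑ i, ∑ j, u i j) * ε := by
      gcongr
      exact Finset.single_le_sum (fun i _ => hrow i) (Finset.mem_univ i)
    rw [abs_sub_comm] at hdiff
    refine (abs_sub_le (z.t i) (∑ j, u i j * z.x i j) (∑ j, u i j * (z.x i j)⁺)).trans ?_
    linarith [hutil i, mul_nonneg (n.cast_nonneg (α := ℝ)) hε]
  · exact (FisherQuad.norm_le_iff hε).2 ⟨hx, fun i => by simpa [FisherQuad.t] using hε,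
      fun j => by simpa [FisherQuad.p] using hε, fun i => by simpa [FisherQuad.y] using hε⟩

theorem sum_sum_mul_sub {ι κ : Type*} [Fintype ι] [Fintype κ] (u x : ι → κ → ℝ) (p : κ → ℝ)
    (y : ι → ℝ) :
    ∑ i, ∑ j, x i j * (p j - u i j * y i) =
      ∑ j, (∑ i, x i j) * p j - ∑ i, (∑ j, u i j * x i j) * y i := by
  simp only [mul_sub, Finset.sum_sub_distrib, Finset.sum_mul]
  rw [Finset.sum_comm]
  congr! 3
  ring

theorem compl_pairing_le {x s x' s' : ℝ} (hξ : 0 ≤ ξ) (hε : 0 ≤ ε) (hx : 0 ≤ x) (hx' : 0 ≤ x')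
    (hs' : 0 ≤ s') (hx's' : x' * s' = 0) (h : |s| ≤ ξ * ε ∨ (0 ≤ s ∧ x ≤ ε)) :
    (x - x') * (s - s') ≤ ε * (ξ * |x - x'| + |s - s'|) := by
  obtain hs | ⟨hs, hxε⟩ := h
  · calc (x - x') * (s - s') = s * (x - x') - x * s' + x' * s' := by ring
      _ ≤ |s| * |x - x'| := by
        rw [← abs_mul]; linarith [le_abs_self (s * (x - x')), mul_nonneg hx hs']
      _ ≤ ξ * ε * |x - x'| + ε * |s - s'| := le_add_of_le_of_nonneg (by gcongr) (by positivity)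
      _ = ε * (ξ * |x - x'| + |s - s'|) := by ring
  · calc (x - x') * (s - s') = x * (s - s') - x' * s + x' * s' := by ring
      _ ≤ x * |s - s'| := by
        linarith [mul_le_mul_of_nonneg_left (le_abs_self (s - s')) hx, mul_nonneg hx' hs]
      _ ≤ ξ * ε * |x - x'| + ε * |s - s'| := le_add_of_nonneg_of_le (by positivity) (by gcongr)
      _ = ε * (ξ * |x - x'| + |s - s'|) := by ring

/-- Monotonicity of the KKT operator, up to the error in its linear and complementarity parts. -/
theorem neg_le_sum_t_sub_mul_y_sub (hξ : 0 ≤ ξ) (hε : 0 ≤ ε) (hz : ApproxKKT u w ξ ε z)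
    (hz' : FisherKKT n m u w z') :
    -((n + m + n * m * (ξ + (1 + ‖u‖))) * (ε * ‖z - z'‖)) ≤
      ∑ i, (z.t i - z'.t i) * (z.y i - z'.y i) := by
  have hutil : ∑ _i : Fin n, -(ε * ‖z - z'‖) ≤
      ∑ i, (z.t i - ∑ j, u i j * z.x i j) * (z.y i - z'.y i) :=
    Finset.sum_le_sum fun i _ => neg_le_of_abs_le <| by
      rw [abs_mul]; gcongr; exacts [hz.utility i, (z - z').abs_y_le_norm i]
  have hsupply : ∑ _j : Fin m, -(ε * ‖z - z'‖) ≤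
      ∑ j, ((∑ i, z.x i j) - 1) * (z.p j - z'.p j) :=
    Finset.sum_le_sum fun j _ => neg_le_of_abs_le <| by
      rw [abs_mul]; gcongr; exacts [hz.supply j, (z - z').abs_p_le_norm j]
  have hcompl : ∑ i, ∑ j, (z.x i j - z'.x i j) * (z.dualSlack u i j - z'.dualSlack u i j) ≤
      ∑ _i : Fin n, ∑ _j : Fin m, (ξ + (1 + ‖u‖)) * (ε * ‖z - z'‖) := by
    refine Finset.sum_le_sum fun i _ => Finset.sum_le_sum fun j _ => ?_
    have hx : |z.x i j - z'.x i j| ≤ ‖z - z'‖ := (z - z').abs_x_le_norm i j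
    have hs : |z.dualSlack u i j - z'.dualSlack u i j| ≤ (1 + ‖u‖) * ‖z - z'‖ :=
      (z.abs_dualSlack_sub_le u z' i j).trans (by gcongr; exact (z - z').norm_dual_le_norm)
    calc (z.x i j - z'.x i j) * (z.dualSlack u i j - z'.dualSlack u i j)
        ≤ ε * (ξ * |z.x i j - z'.x i j| + |z.dualSlack u i j - z'.dualSlack u i j|) :=
          compl_pairing_le hξ hε (hz.x_nonneg i j) (hz'.x_nonneg i j) (hz'.dualSlack_nonneg i j)
            (hz'.x_mul_dualSlack i j) (hz.compl i j)
      _ ≤ ε * (ξ * ‖z - z'‖ + (1 + ‖u‖) * ‖z - z'‖) := by gcongr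
      _ = (ξ + (1 + ‖u‖)) * (ε * ‖z - z'‖) := by ring
  have hpair : ∑ i, (z.t i - z'.t i) * (z.y i - z'.y i) =
      ∑ i, (z.t i - ∑ j, u i j * z.x i j) * (z.y i - z'.y i) +
      ∑ j, ((∑ i, z.x i j) - 1) * (z.p j - z'.p j) -
      ∑ i, ∑ j, (z.x i j - z'.x i j) * (z.dualSlack u i j - z'.dualSlack u i j) := by
    have hbilin := sum_sum_mul_sub u (z.x - z'.x) (z.p - z'.p) (z.y - z'.y)
    simp only [FisherQuad.dualSlack, Pi.sub_apply, Finset.sum_sub_distrib, mul_sub, sub_mul,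
      hz'.sum_x, hz'.t_eq] at hbilin ⊢
    linarith
  simp only [Finset.sum_const, Finset.card_univ, Fintype.card_fin, nsmul_eq_mul]
    at hutil hsupply hcompl
  linarith

theorem half_le_norm_mul_y (hu : ∀ i j, 0 ≤ u i j) (hε : 0 ≤ ε) (hz : ApproxKKT u w ξ ε z)
    {i : Fin n} (hw : 2 * ε * (‖z‖ + 1) < w i) : w i / 2 ≤ ‖z‖ * z.y i := by
  have hεz : 0 ≤ ε * ‖z‖ := by positivity
  have ht : -ε ≤ z.t i := by
    have hux : 0 ≤ ∑ j, u i j * z.x i j :=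
      Finset.sum_nonneg fun j _ => mul_nonneg (hu i j) (hz.x_nonneg i j)
    linarith [(abs_le.1 (hz.utility i)).1]
  have hty : w i / 2 ≤ z.t i * z.y i := by linarith [(abs_le.1 (hz.budget i)).1]
  have ht0 : 0 < z.t i := by
    by_contra! hneg
    have hle : z.t i * z.y i ≤ ε * ‖z‖ := by
      refine (le_abs_self _).trans ?_
      rw [abs_mul]
      gcongr
      exacts [abs_le.2 ⟨ht, hneg.trans hε⟩, z.abs_y_le_norm i]
    linarith
  have hy0 : 0 < z.y i := pos_of_mul_pos_right (by linarith) ht0.le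
  exact hty.trans (by gcongr; exact (le_abs_self _).trans (z.abs_t_le_norm i))

theorem sq_sub_mul_div_le {t y t' y' w : ℝ} (hty' : t' * y' = w) (ht' : 0 < t')
    (h : |t * y - w| ≤ ε) :
    (t - t') ^ 2 * (y / t') ≤ t'⁻¹ * (ε * |t - t'|) - (t - t') * (y - y') := by
  have hsplit : (t - t') ^ 2 * (y / t') =
      t'⁻¹ * ((t * y - w) * (t - t')) - (t - t') * (y - y') := by
    rw [← hty']; field_simp; ring
  have hbudget : (t * y - w) * (t - t') ≤ ε * |t - t'| := by
    refine (le_abs_self _).trans ?_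
    rw [abs_mul]
    gcongr
  rw [hsplit]
  exact sub_le_sub_right (mul_le_mul_of_nonneg_left hbudget (inv_pos.2 ht').le) _

/-- Strong monotonicity of the KKT operator in `t`, with modulus `y i / z'.t i`. -/
theorem sum_sq_sub_mul_div_le (hu : ∀ i j, 0 ≤ u i j) (hw : ∀ i, 0 < w i) (hξ : 0 ≤ ξ)
    (hε : 0 ≤ ε) (hz : ApproxKKT u w ξ ε z) (hz' : FisherKKT n m u w z') :
    ∑ i, (z.t i - z'.t i) ^ 2 * (z.y i / z'.t i) ≤
      (n * ‖z'.t⁻¹‖ + (n + m + n * m * (ξ + (1 + ‖u‖)))) * (ε * ‖z - z'‖) := by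
  have hdiag : ∑ i, (z.t i - z'.t i) ^ 2 * (z.y i / z'.t i) ≤
      ∑ i, (‖z'.t⁻¹‖ * (ε * ‖z - z'‖) - (z.t i - z'.t i) * (z.y i - z'.y i)) := by
    refine Finset.sum_le_sum fun i _ =>
      (sq_sub_mul_div_le (hz'.t_mul_y i) (hz'.t_pos hu hw i) (hz.budget i)).trans ?_
    gcongr
    exacts [(le_abs_self _).trans (norm_le_pi_norm z'.t⁻¹ i), (z - z').abs_t_le_norm i]
  have hmono := neg_le_sum_t_sub_mul_y_sub hξ hε hz hz'
  simp only [Finset.sum_sub_distrib, Finset.sum_const, Finset.card_univ, Fintype.card_fin,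
    nsmul_eq_mul] at hdiag
  linarith

theorem norm_t_sub_sq_le (hu : ∀ i j, 0 ≤ u i j) (hw : ∀ i, 0 < w i) (hξ : 0 ≤ ξ) (hε : 0 ≤ ε)
    (hz : ApproxKKT u w ξ ε z) (hz' : FisherKKT n m u w z')
    (hεw : ∀ i, 2 * ε * (‖z‖ + 1) < w i) :
    ‖z.t - z'.t‖ ^ 2 ≤ 2 * ‖z'.t / w‖ * ‖z‖ *
      ((n * ‖z'.t⁻¹‖ + (n + m + n * m * (ξ + (1 + ‖u‖)))) * (ε * ‖z - z'‖)) := by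
  have ht' := hz'.t_pos hu hw
  have hy : ∀ i, w i / 2 ≤ ‖z‖ * z.y i := fun i => half_le_norm_mul_y hu hε hz (hεw i)
  have hterm : ∀ i, 0 ≤ (z.t i - z'.t i) ^ 2 * (z.y i / z'.t i) := fun i =>
    have hy0 : 0 < z.y i := pos_of_mul_pos_right ((half_pos (hw i)).trans_le (hy i)) (norm_nonneg z)
    mul_nonneg (sq_nonneg _) (div_pos hy0 (ht' i)).le
  have hsum := sum_sq_sub_mul_div_le hu hw hξ hε hz hz'
  rw [← Real.le_sqrt (norm_nonneg _) (by positivity),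
    pi_norm_le_iff_of_nonneg (Real.sqrt_nonneg _)]
  refine fun i => Real.abs_le_sqrt ?_
  have hcoeff : 1 ≤ 2 * ‖z'.t / w‖ * ‖z‖ * (z.y i / z'.t i) := by
    have hi : z'.t i / w i ≤ ‖z'.t / w‖ := (le_abs_self _).trans (norm_le_pi_norm (z'.t / w) i)
    calc (1 : ℝ) = 2 * (z'.t i / w i) * (w i / 2) / z'.t i := by
          field_simp [(hw i).ne', (ht' i).ne']
      _ ≤ 2 * ‖z'.t / w‖ * (‖z‖ * z.y i) / z'.t i := by
          gcongr
          exacts [(ht' i).le, (half_pos (hw i)).le, hy i]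
      _ = 2 * ‖z'.t / w‖ * ‖z‖ * (z.y i / z'.t i) := by ring
  calc (z.t i - z'.t i) ^ 2
      ≤ 2 * ‖z'.t / w‖ * ‖z‖ * ((z.t i - z'.t i) ^ 2 * (z.y i / z'.t i)) := by
        linarith [mul_le_mul_of_nonneg_left hcoeff (sq_nonneg (z.t i - z'.t i))]
    _ ≤ _ := mul_le_mul_of_nonneg_left
        ((Finset.single_le_sum (fun i _ => hterm i) (Finset.mem_univ i)).trans hsum)
        (by positivity)

theorem norm_y_sub_le (hz : ApproxKKT u w ξ ε z) (hz' : FisherKKT n m u w z')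
    (ht' : ∀ i, z'.t i ≠ 0) (hε : 0 ≤ ε) :
    ‖z.y - z'.y‖ ≤ ‖z'.t⁻¹‖ * (‖z.t - z'.t‖ * ‖z‖ + ε) := by
  refine (pi_norm_le_iff_of_nonneg (by positivity)).2 fun i => ?_
  have hsplit : z.y i - z'.y i =
      (z'.t i)⁻¹ * ((z.t i * z.y i - w i) - (z.t i - z'.t i) * z.y i) := by
    have := ht' i
    rw [← hz'.t_mul_y i]; field_simp; ring
  calc ‖z.y i - z'.y i‖
      ≤ ‖(z'.t i)⁻¹‖ * (‖z.t i - z'.t i‖ * ‖z.y i‖ + ‖z.t i * z.y i - w i‖) := by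
        rw [hsplit, norm_mul, add_comm, ← norm_mul (z.t i - z'.t i)]
        exact mul_le_mul_of_nonneg_left (norm_sub_le _ _) (norm_nonneg _)
    _ ≤ ‖z'.t⁻¹‖ * (‖z.t - z'.t‖ * ‖z‖ + ε) := by
        gcongr
        exacts [norm_le_pi_norm z'.t⁻¹ i, norm_le_pi_norm (z.t - z'.t) i, z.abs_y_le_norm i,
          hz.budget i]

/-- Up to `O(ε)`, the price `p j` is the maximum of `u i j * y i` over `i`, nearly attained at any
consumer buying more than `ε` of good `j`; such a consumer exists since `ε * (n + 1) < 1`. -/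
theorem norm_p_sub_le (hz : ApproxKKT u w ξ ε z) (hz' : FisherKKT n m u w z') (hξ : 0 ≤ ξ)
    (hε : 0 ≤ ε) (hεn : ε * (n + 1) < 1) :
    ‖z.p - z'.p‖ ≤ ‖u‖ * ‖z.y - z'.y‖ + (1 + ξ) * ε := by
  have huy : ∀ i j, |u i j * (z.y i - z'.y i)| ≤ ‖u‖ * ‖z.y - z'.y‖ := fun i j => by
    rw [abs_mul]
    gcongr
    exacts [(norm_le_pi_norm (u i) j).trans (norm_le_pi_norm u i), norm_le_pi_norm (z.y - z'.y) i]
  have hξε : 0 ≤ ξ * ε := by positivity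
  refine (pi_norm_le_iff_of_nonneg (by positivity)).2 fun j => abs_le.2 ⟨?_, ?_⟩
  · obtain ⟨i, -, hi⟩ : ∃ i ∈ Finset.univ, z'.x i j ≠ 0 :=
      Finset.exists_ne_zero_of_sum_ne_zero (by rw [hz'.sum_x j]; exact one_ne_zero)
    have hs' : z'.p j - u i j * z'.y i = 0 :=
      (mul_eq_zero.1 (hz'.x_mul_dualSlack i j)).resolve_left hi
    have hs : -ε ≤ z.p j - u i j * z.y i := hz.neg_le_dualSlack i j
    simp only [Pi.sub_apply]
    linarith [(abs_le.1 (huy i j)).1]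
  · obtain ⟨i, -, hi⟩ : ∃ i ∈ Finset.univ, ε < z.x i j := by
      refine Finset.exists_lt_of_sum_lt ?_
      simp only [Finset.sum_const, Finset.card_univ, Fintype.card_fin, nsmul_eq_mul]
      linarith [(abs_le.1 (hz.supply j)).1]
    have hs : |z.p j - u i j * z.y i| ≤ ξ * ε := (hz.compl i j).resolve_right fun h => h.2.not_gt hi
    have hs' : 0 ≤ z'.p j - u i j * z'.y i := hz'.dualSlack_nonneg i j
    simp only [Pi.sub_apply]
    linarith [(abs_le.1 (huy i j)).2, (abs_le.1 hs).2]

theorem x_le_of_dualSlack_pos (hz : ApproxKKT u w ξ ε z) (hξ : 0 ≤ ξ) (hε : 0 ≤ ε) {i : Fin n}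
    {j : Fin m} (h : 0 < z'.dualSlack u i j) :
    z.x i j ≤ ε + ‖z‖ * ‖(z'.dualSlack u)⁻¹‖ * ((1 + ‖u‖) * ‖z.2.2 - z'.2.2‖ + ξ * ε) := by
  obtain hs | ⟨-, hx⟩ := hz.compl i j
  · have hs' : z'.dualSlack u i j ≤ (1 + ‖u‖) * ‖z.2.2 - z'.2.2‖ + ξ * ε := by
      linarith [(abs_le.1 (z.abs_dualSlack_sub_le u z' i j)).1, (abs_le.1 hs).2]
    have hinv : (z'.dualSlack u i j)⁻¹ ≤ ‖(z'.dualSlack u)⁻¹‖ := (le_abs_self _).trans <|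
      (norm_le_pi_norm ((z'.dualSlack u)⁻¹ i) j).trans (norm_le_pi_norm (z'.dualSlack u)⁻¹ i)
    calc z.x i j ≤ ‖z‖ := (le_abs_self _).trans (z.abs_x_le_norm i j)
      _ = ‖z‖ * (z'.dualSlack u i j)⁻¹ * z'.dualSlack u i j := by field_simp
      _ ≤ ‖z‖ * ‖(z'.dualSlack u)⁻¹‖ * ((1 + ‖u‖) * ‖z.2.2 - z'.2.2‖ + ξ * ε) := by gcongr
      _ ≤ _ := le_add_of_nonneg_left hε
  · exact le_add_of_le_of_nonneg hx (by positivity)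

/-- The linear part of the KKT system in `x`: supplies, utilities, and the entries on a set `P` of
pairs where `x` is required to vanish. -/
def allocMap (u : Fin n → Fin m → ℝ) (P : Fin n × Fin m → Prop) :
    (Fin n × Fin m → ℝ) →L[ℝ] (Fin m → ℝ) × (Fin n → ℝ) × ({q // P q} → ℝ) :=
  (ContinuousLinearMap.pi fun j => ∑ i, ContinuousLinearMap.proj (i, j)).prod <|
    (ContinuousLinearMap.pi fun i => ∑ j, u i j • ContinuousLinearMap.proj (i, j)).prod <|
      ContinuousLinearMap.pi fun q => ContinuousLinearMap.proj q.1

theorem allocMap_apply (P : Fin n × Fin m → Prop) (x : Fin n × Fin m → ℝ) :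
    allocMap u P x =
      (fun j => ∑ i, x (i, j), fun i => ∑ j, u i j * x (i, j), fun q => x q.1) := by
  ext <;> simp [allocMap]

theorem norm_allocMap_sub_le (hz : ApproxKKT u w ξ ε z) (hz' : FisherKKT n m u w z') (hε : 0 ≤ ε)
    {δ : ℝ} (hδ : 0 ≤ δ) (hx : ∀ i j, 0 < z'.dualSlack u i j → z.x i j ≤ δ) :
    ‖allocMap u (fun q => 0 < z'.dualSlack u q.1 q.2) (Function.uncurry z.x) -
      allocMap u (fun q => 0 < z'.dualSlack u q.1 q.2) (Function.uncurry z'.x)‖ ≤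
      ‖z.t - z'.t‖ + ε + δ := by
  have hbound : 0 ≤ ‖z.t - z'.t‖ + ε + δ := by positivity
  simp only [allocMap_apply, Prod.mk_sub_mk, Prod.norm_mk, sup_le_iff,
    pi_norm_le_iff_of_nonneg hbound, Pi.sub_apply, Function.uncurry, Real.norm_eq_abs]
  refine ⟨fun j => ?_, fun i => ?_, fun ⟨⟨i, j⟩, hs⟩ => ?_⟩
  · rw [hz'.sum_x j]
    linarith [hz.supply j, norm_nonneg (z.t - z'.t)]
  · rw [← hz'.t_eq i]
    have ht : |z.t i - z'.t i| ≤ ‖z.t - z'.t‖ := norm_le_pi_norm (z.t - z'.t) i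
    have := abs_sub_le (∑ j, u i j * z.x i j) (z.t i) (z'.t i)
    rw [abs_sub_comm _ (z.t i)] at this
    linarith [hz.utility i]
  · rw [hz'.x_eq_zero hs, sub_zero, abs_of_nonneg (hz.x_nonneg i j)]
    linarith [hx i j hs, norm_nonneg (z.t - z'.t)]

theorem FisherKKT.of_allocMap_eq (hz : FisherKKT n m u w z) {x : Fin n × Fin m → ℝ} (hx : 0 ≤ x)
    (h : allocMap u (fun q => 0 < z.dualSlack u q.1 q.2) x =
      allocMap u (fun q => 0 < z.dualSlack u q.1 q.2) (Function.uncurry z.x)) :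
    FisherKKT n m u w (Function.curry x, z.2) := by
  simp only [allocMap_apply, Prod.mk.injEq, Function.uncurry] at h
  obtain ⟨hsupply, hutil, hzero⟩ := h
  refine ⟨hz.t_mul_y, fun i j => ?_, hz.dualSlack_nonneg, fun j => ?_, fun i => ?_,
    fun i j => hx (i, j)⟩
  · obtain hs | hs := (hz.dualSlack_nonneg i j).lt_or_eq
    · have hxij : x (i, j) = z.x i j := congrFun hzero ⟨(i, j), hs⟩
      exact mul_eq_zero_of_left (hxij.trans (hz.x_eq_zero hs)) _
    · exact mul_eq_zero_of_right _ hs.symm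
  · exact (congrFun hsupply j).trans (hz.sum_x j)
  · exact (hz.t_eq i).trans (congrFun hutil i).symm

theorem norm_dual_sub_le (hu : ∀ i j, 0 ≤ u i j) (hw : ∀ i, 0 < w i) (hξ : 0 ≤ ξ) (hε : 0 ≤ ε)
    (hz : ApproxKKT u w ξ ε z) (hz' : FisherKKT n m u w z') (hεn : ε * (n + 1) < 1) :
    ‖z.2.2 - z'.2.2‖ ≤
      ((1 + ‖u‖) * (‖z'.t⁻¹‖ * (‖z‖ + 1)) + 1 + ξ) * (‖z.t - z'.t‖ + ε) := by
  have hy : ‖z.y - z'.y‖ ≤ ‖z'.t⁻¹‖ * (‖z‖ + 1) * (‖z.t - z'.t‖ + ε) := by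
    refine (norm_y_sub_le hz hz' (fun i => (hz'.t_pos hu hw i).ne') hε).trans ?_
    rw [mul_assoc]
    gcongr
    linarith [mul_nonneg (norm_nonneg z) hε, norm_nonneg (z.t - z'.t)]
  have huy := mul_le_mul_of_nonneg_left hy (norm_nonneg u)
  have hp := norm_p_sub_le hz hz' hξ hε hεn
  have hξt : 0 ≤ (1 + ξ) * ‖z.t - z'.t‖ := by positivity
  have hξε : 0 ≤ (1 + ξ) * ε := by positivity
  have hy0 := (norm_nonneg _).trans hy
  have huy0 := mul_nonneg (norm_nonneg u) hy0
  exact max_le (show ‖z.p - z'.p‖ ≤ _ by linarith) (show ‖z.y - z'.y‖ ≤ _ by linarith)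

theorem exists_norm_dual_sub_le_and_x_le {zs : FisherQuad n m} (hu : ∀ i j, 0 ≤ u i j)
    (hw : ∀ i, 0 < w i) (hξ : 0 ≤ ξ) (hzs : FisherKKT n m u w zs) (R : ℝ) :
    ∃ C : ℝ, 0 ≤ C ∧ ∀ (ε : ℝ) z, 0 ≤ ε → ε * (n + 1) < 1 → ApproxKKT u w ξ ε z → ‖z‖ ≤ R →
      ‖z.2.2 - zs.2.2‖ ≤ C * (‖z.t - zs.t‖ + ε) ∧
        ∀ i j, 0 < zs.dualSlack u i j → z.x i j ≤ C * (‖z.t - zs.t‖ + ε) := by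
  let Cd : ℝ := (1 + ‖u‖) * (‖zs.t⁻¹‖ * (|R| + 1)) + 1 + ξ
  let Cx : ℝ := 1 + |R| * ‖(zs.dualSlack u)⁻¹‖ * ((1 + ‖u‖) * Cd + ξ)
  have hCd : 0 ≤ Cd := by positivity
  refine ⟨max Cd Cx, le_max_of_le_left hCd, fun ε z hε hεn hz hzR => ?_⟩
  replace hzR := hzR.trans (le_abs_self R)
  set T := ‖z.t - zs.t‖
  have hT : 0 ≤ T := norm_nonneg _
  have hdual : ‖z.2.2 - zs.2.2‖ ≤ Cd * (T + ε) :=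
    (norm_dual_sub_le hu hw hξ hε hz hzs hεn).trans (by unfold Cd; gcongr)
  refine ⟨hdual.trans (by gcongr; exact le_max_left _ _), fun i j hs => ?_⟩
  calc z.x i j ≤ ε + ‖z‖ * ‖(zs.dualSlack u)⁻¹‖ * ((1 + ‖u‖) * ‖z.2.2 - zs.2.2‖ + ξ * ε) :=
        x_le_of_dualSlack_pos hz hξ hε hs
    _ ≤ (T + ε) + |R| * ‖(zs.dualSlack u)⁻¹‖ * ((1 + ‖u‖) * (Cd * (T + ε)) + ξ * (T + ε)) := by
        gcongr <;> linarith
    _ = Cx * (T + ε) := by ring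
    _ ≤ max Cd Cx * (T + ε) := by gcongr; exact le_max_right _ _

/-- Keep `t`, `p`, `y` of the given KKT point and apply Hoffman's bound to the allocation. -/
theorem exists_fisherKKT_t_eq_norm_sub_le {zs : FisherQuad n m} (hu : ∀ i j, 0 ≤ u i j)
    (hw : ∀ i, 0 < w i) (hξ : 0 ≤ ξ) (hzs : FisherKKT n m u w zs) (R : ℝ) :
    ∃ C : ℝ, 0 ≤ C ∧ ∀ (ε : ℝ) z, 0 ≤ ε → ε * (n + 1) < 1 → ApproxKKT u w ξ ε z → ‖z‖ ≤ R →
      ∃ z', FisherKKT n m u w z' ∧ z'.t = zs.t ∧ ‖z - z'‖ ≤ C * (‖z.t - zs.t‖ + ε) := by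
  obtain ⟨H, hH0, hH⟩ :=
    exists_nonneg_map_eq_norm_sub_le (allocMap u fun q => 0 < zs.dualSlack u q.1 q.2)
  obtain ⟨C, hC0, hC⟩ := exists_norm_dual_sub_le_and_x_le hu hw hξ hzs R
  refine ⟨H * (1 + C) + C + 1, by positivity, fun ε z hε hεn hz hzR => ?_⟩
  obtain ⟨hdual, hx⟩ := hC ε z hε hεn hz hzR
  set T := ‖z.t - zs.t‖
  have hT : 0 ≤ T := norm_nonneg _
  obtain ⟨x', hx'0, hx', hxx'⟩ := hH (Function.uncurry z.x) (Function.uncurry zs.x)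
    (fun q => hz.x_nonneg q.1 q.2) fun q => hzs.x_nonneg q.1 q.2
  replace hxx' : ‖Function.uncurry z.x - x'‖ ≤ H * (1 + C) * (T + ε) := by
    refine hxx'.trans ?_
    rw [mul_assoc, one_add_mul]
    gcongr
    exact norm_allocMap_sub_le hz hzs hε (by positivity) hx
  have hHT : 0 ≤ H * (1 + C) * (T + ε) := by positivity
  have hCT : 0 ≤ C * (T + ε) := by positivity
  refine ⟨(Function.curry x', zs.2), hzs.of_allocMap_eq hx'0 hx', rfl,
    norm_prod_le_iff.2 ⟨?_, norm_prod_le_iff.2 ⟨show T ≤ _ by linarith, hdual.trans (by linarith)⟩⟩⟩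
  refine (pi_norm_le_iff_of_nonneg (by positivity)).2 fun i =>
    (pi_norm_le_iff_of_nonneg (by positivity)).2 fun j => ?_
  exact (norm_le_pi_norm (Function.uncurry z.x - x') (i, j)).trans (by linarith)

theorem le_add_one_mul_of_sq_le {T G : ℝ} (hε : 0 ≤ ε) (hG : 0 ≤ G)
    (h : T ^ 2 ≤ G * (ε * (T + ε))) : T ≤ (G + 1) * ε := by
  by_contra! hlt
  have hT : 0 < T := lt_of_le_of_lt (by positivity) hlt
  have hprod : 0 < (T - (G + 1) * ε) * (T + ε) := mul_pos (sub_pos.2 hlt) (by positivity)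
  linarith [sq_nonneg ε]

theorem exists_pos_forall_le_mul_lt (hw : ∀ i, 0 < w i) (R : ℝ) :
    ∃ ε₀ : ℝ, 0 < ε₀ ∧ ∀ ε, 0 ≤ ε → ε ≤ ε₀ →
      (∀ i, 2 * ε * (R + 1) < w i) ∧ ε * (n + 1) < 1 := by
  have hsmall : ∀ᶠ ε in 𝓝 (0 : ℝ), (∀ i, 2 * ε * (R + 1) < w i) ∧ ε * (n + 1) < 1 :=
    (eventually_all.2 fun i => ContinuousAt.eventually_lt (by fun_prop) (by fun_prop)
      (by simpa using hw i)).and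
      (ContinuousAt.eventually_lt (by fun_prop) (by fun_prop) (by simp))
  obtain ⟨r, hr, hball⟩ := Metric.eventually_nhds_iff.1 hsmall
  refine ⟨r / 2, half_pos hr, fun ε hε hεr => hball ?_⟩
  rw [Real.dist_0_eq_abs, abs_of_nonneg hε]
  linarith

theorem exists_fisherKKT_norm_sub_le_of_small (hu : ∀ i j, 0 ≤ u i j) (hw : ∀ i, 0 < w i)
    (hξ : 0 ≤ ξ) (hne : ∃ z, FisherKKT n m u w z) (R : ℝ) :
    ∃ ε₀ C : ℝ, 0 < ε₀ ∧ 0 ≤ C ∧ ∀ ε z, 0 ≤ ε → ε ≤ ε₀ → ApproxKKT u w ξ ε z → ‖z‖ ≤ R →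
      ∃ z', FisherKKT n m u w z' ∧ ‖z - z'‖ ≤ C * ε := by
  obtain ⟨zs, hzs⟩ := hne
  obtain ⟨ε₀, hε₀, hsmall⟩ := exists_pos_forall_le_mul_lt (n := n) hw R
  obtain ⟨C, hC0, hC⟩ := exists_fisherKKT_t_eq_norm_sub_le hu hw hξ hzs R
  let M : ℝ := n * ‖zs.t⁻¹‖ + (n + m + n * m * (ξ + (1 + ‖u‖)))
  let G : ℝ := 2 * ‖zs.t / w‖ * |R| * (M * C)
  have hG : 0 ≤ G := by positivity
  refine ⟨ε₀, C * (G + 2), hε₀, by positivity, fun ε z hε hεε₀ hz hzR => ?_⟩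
  obtain ⟨hεw, hεn⟩ := hsmall ε hε hεε₀
  obtain ⟨z', hz', hzt, hdist⟩ := hC ε z hε hεn hz hzR
  refine ⟨z', hz', ?_⟩
  have hsq : ‖z.t - zs.t‖ ^ 2 ≤ G * (ε * (‖z.t - zs.t‖ + ε)) := by
    calc ‖z.t - zs.t‖ ^ 2 ≤ 2 * ‖zs.t / w‖ * ‖z‖ * (M * (ε * ‖z - z'‖)) := by
          simpa only [hzt] using norm_t_sub_sq_le hu hw hξ hε hz hz' fun i =>
            (show 2 * ε * (‖z‖ + 1) ≤ 2 * ε * (R + 1) by gcongr).trans_lt (hεw i)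
      _ ≤ 2 * ‖zs.t / w‖ * |R| * (M * (ε * (C * (‖z.t - zs.t‖ + ε)))) := by
          gcongr
          exact hzR.trans (le_abs_self R)
      _ = G * (ε * (‖z.t - zs.t‖ + ε)) := by ring
  calc ‖z - z'‖ ≤ C * (‖z.t - zs.t‖ + ε) := hdist
    _ ≤ C * ((G + 1) * ε + ε) := by gcongr; exact le_add_one_mul_of_sq_le hε hG hsq
    _ = C * (G + 2) * ε := by ring

theorem exists_fisherKKT_norm_sub_le (hu : ∀ i j, 0 ≤ u i j) (hw : ∀ i, 0 < w i)
    (hξ : 0 ≤ ξ) (hne : ∃ z, FisherKKT n m u w z) (R : ℝ) :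
    ∃ C : ℝ, 0 ≤ C ∧ ∀ ε z, 0 ≤ ε → ApproxKKT u w ξ ε z → ‖z‖ ≤ R →
      ∃ z', FisherKKT n m u w z' ∧ ‖z - z'‖ ≤ C * ε := by
  obtain ⟨ε₀, C, hε₀, hC0, hC⟩ := exists_fisherKKT_norm_sub_le_of_small hu hw hξ hne R
  obtain ⟨zs, hzs⟩ := hne
  refine ⟨max C ((|R| + ‖zs‖) / ε₀), le_max_of_le_left hC0, fun ε z hε hz hzR => ?_⟩
  obtain hεε₀ | hεε₀ := le_total ε ε₀
  · obtain ⟨z', hz', hdist⟩ := hC ε z hε hεε₀ hz hzR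
    exact ⟨z', hz', hdist.trans (by gcongr; exact le_max_left _ _)⟩
  · refine ⟨zs, hzs, ?_⟩
    calc ‖z - zs‖ ≤ |R| + ‖zs‖ := (norm_sub_le _ _).trans (by linarith [le_abs_self R])
      _ = (|R| + ‖zs‖) / ε₀ * ε₀ := by field_simp
      _ ≤ max C ((|R| + ‖zs‖) / ε₀) * ε := by gcongr; exact le_max_right _ _

theorem exists_fisherKKT_norm_sub_le_mul_FResidNorm (hu : ∀ i j, 0 ≤ u i j) (hw : ∀ i, 0 < w i)
    (hξ : 0 < ξ) (hne : ∃ z, FisherKKT n m u w z) (R : ℝ) :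
    ∃ C : ℝ, 0 ≤ C ∧ ∀ z, ‖z‖ ≤ R →
      ∃ z', FisherKKT n m u w z' ∧ ‖z - z'‖ ≤ C * FResidNorm n m u w ξ z := by
  obtain ⟨C, hC0, hC⟩ := exists_fisherKKT_norm_sub_le hu hw hξ.le hne R
  let κ : ℝ := 1 + n + ∑ i, ∑ j, u i j
  have hκ : 0 ≤ κ := add_nonneg (by positivity) (Finset.sum_nonneg fun i _ =>
    Finset.sum_nonneg fun j _ => hu i j)
  refine ⟨1 + C * κ, by positivity, fun z hzR => ?_⟩
  obtain ⟨happrox, hposPart⟩ := approxKKT_posPart hu hξ (w := w) z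
  obtain ⟨z', hz', hdist⟩ :=
    hC _ _ (mul_nonneg hκ (Real.sqrt_nonneg _)) happrox (z.norm_posPart_le.trans hzR)
  refine ⟨z', hz', ?_⟩
  calc ‖z - z'‖ ≤ ‖z - (z.x⁺, z.2)‖ + ‖(z.x⁺, z.2) - z'‖ := norm_sub_le_norm_sub_add_norm_sub _ _ _
    _ ≤ FResidNorm n m u w ξ z + C * (κ * FResidNorm n m u w ξ z) :=
      add_le_add ((norm_sub_rev _ _).trans_le hposPart) hdist
    _ = (1 + C * κ) * FResidNorm n m u w ξ z := by ring

end KKT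

theorem fisher_kkt_error_bound_general (n m : ℕ) (u : Fin n → Fin m → ℝ) (w : Fin n → ℝ)
    (hu : ∀ i j, 0 ≤ u i j)
    (hw : ∀ i, 0 < w i)
    (hne : ∃ z : FisherQuad n m, FisherKKT n m u w z)
    (ξ : ℝ) (hξ : 0 < ξ) (R : ℝ) :
    ∃ γ : ℝ, 0 < γ ∧ ∀ z : FisherQuad n m, quadNorm n m z ≤ R →
      γ * quadDist n m z {z' | FisherKKT n m u w z'} ≤ FResidNorm n m u w ξ z := by
  obtain ⟨C, hC0, hC⟩ := exists_fisherKKT_norm_sub_le_mul_FResidNorm hu hw hξ hne R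
  let N : ℝ := Real.sqrt (n * m + n + m + n)
  refine ⟨(N * C + 1)⁻¹, by positivity, fun z hzR => ?_⟩
  obtain ⟨z', hz', hdist⟩ := hC z ((norm_le_quadNorm z).trans hzR)
  have hF : 0 ≤ FResidNorm n m u w ξ z := Real.sqrt_nonneg _
  rw [inv_mul_le_iff₀ (by positivity)]
  calc quadDist n m z {z' | FisherKKT n m u w z'} ≤ quadNorm n m (z - z') :=
        quadDist_le_quadNorm_sub hz'
    _ ≤ N * ‖z - z'‖ := quadNorm_le_sqrt_mul_norm _
    _ ≤ N * (C * FResidNorm n m u w ξ z) := by gcongr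
    _ ≤ (N * C + 1) * FResidNorm n m u w ξ z := by linarith

/-- KKT error bound for the Fisher market problem: on every bounded region, the norm
of the scaled KKT residual dominates a positive multiple of the distance to the KKT
solution set. -/
theorem fisher_kkt_error_bound (n m : ℕ) (u : Fin n → Fin m → ℝ) (w : Fin n → ℝ)
    (hu : ∀ i j, 0 ≤ u i j)
    (hrow : ∀ i, ∃ j, 0 < u i j)
    (hcol : ∀ j, ∃ i, 0 < u i j)
    (hw : ∀ i, 0 < w i)
    (hne : ∃ z : FisherQuad n m, FisherKKT n m u w z)
    (ξ : ℝ) (hξ : 0 < ξ) :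
    ∀ R : ℝ, 0 < R → ∃ γ : ℝ, 0 < γ ∧
      ∀ z : FisherQuad n m, (∀ i j, 0 ≤ z.1 i j) → quadNorm n m z ≤ R →
        γ * quadDist n m z {z' | FisherKKT n m u w z'} ≤ FResidNorm n m u w ξ z := by
  intro R _
  obtain ⟨γ, hγ, hbound⟩ := fisher_kkt_error_bound_general n m u w hu hw hne ξ hξ R
  exact ⟨γ, hγ, fun z _ => hbound z⟩

end
end
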